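/- arXiv:2108.00876 — 5 statements merged into one kernel-verified Lean document; each statement's English description precedes it below -/
import Mathlib

section
/- Let θ ∈ (0, π), let n ≥ 1, let λ : {1,…,n} → ℝ, and let 1 ≤ m ≤ n. Then the following are equivalent: (i) for every subset I ⊆ {1,…,n} with |I| = m one has ∑_{i∈I} arccot(λᵢ) < θ; (ii) for every nonempty subset K ⊆ {1,…,n} with |K| ≤ m one has Re(∏_{i∈K} (λᵢ + i)) − cot(θ)·Im(∏_{i∈K} (λᵢ + i)) > 0. -/
open Real

/-- The arccotangent with range `(0, π)`. -/
noncomputable def arccot (x : ℝ) : ℝ := π / 2 - Real.arctan x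

lemma arccot_pos' (x : ℝ) : 0 < arccot x := by
  unfold arccot; linarith [Real.arctan_lt_pi_div_two x]

lemma arccot_lt_pi' (x : ℝ) : arccot x < π := by
  unfold arccot; linarith [Real.neg_pi_div_two_lt_arctan x]

lemma polar_one (x : ℝ) : ∃ r : ℝ, 0 < r ∧
    (x : ℂ) + Complex.I = r * Complex.exp ((arccot x : ℝ) * Complex.I) := by
  have h : 0 < √(1 + x ^ 2) := Real.sqrt_pos.2 (by positivity)
  refine ⟨√(1 + x ^ 2), h, ?_⟩
  apply Complex.ext
  · rw [Complex.re_ofReal_mul, Complex.exp_ofReal_mul_I_re]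
    simp only [arccot, Real.cos_pi_div_two_sub, Real.sin_arctan]
    simp
    field_simp
  · rw [Complex.im_ofReal_mul, Complex.exp_ofReal_mul_I_im]
    simp only [arccot, Real.sin_pi_div_two_sub, Real.cos_arctan]
    simp
    field_simp

lemma polar_prod {n : ℕ} (lam : Fin n → ℝ) (K : Finset (Fin n)) : ∃ r : ℝ, 0 < r ∧
    ∏ i ∈ K, ((lam i : ℂ) + Complex.I)
      = r * Complex.exp ((∑ i ∈ K, arccot (lam i) : ℝ) * Complex.I) := by
  choose r hr h using fun i => polar_one (lam i)
  refine ⟨∏ i ∈ K, r i, Finset.prod_pos fun i _ => hr i, ?_⟩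
  rw [Finset.prod_congr rfl fun i _ => h i, Finset.prod_mul_distrib, ← Complex.exp_sum]
  push_cast
  rw [Finset.sum_mul]

lemma pos_iff_sin (θ : ℝ) (hθ : θ ∈ Set.Ioo 0 π) {n : ℕ} (lam : Fin n → ℝ)
    (K : Finset (Fin n)) :
    0 < (∏ i ∈ K, ((lam i : ℂ) + Complex.I)).re
              - (Real.cos θ / Real.sin θ) * (∏ i ∈ K, ((lam i : ℂ) + Complex.I)).im
    ↔ 0 < Real.sin (θ - ∑ i ∈ K, arccot (lam i)) := by
  obtain ⟨r, hr, h⟩ := polar_prod lam K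
  have hs : 0 < Real.sin θ := Real.sin_pos_of_pos_of_lt_pi hθ.1 hθ.2
  rw [h, Complex.re_ofReal_mul, Complex.exp_ofReal_mul_I_re, Complex.im_ofReal_mul,
    Complex.exp_ofReal_mul_I_im]
  generalize ∑ i ∈ K, arccot (lam i) = S
  have e : r * Real.cos S - Real.cos θ / Real.sin θ * (r * Real.sin S)
      = (r / Real.sin θ) * Real.sin (θ - S) := by
    rw [Real.sin_sub]; field_simp
  rw [e]
  exact mul_pos_iff_of_pos_left (div_pos hr hs)

/-- For `θ ∈ (0, π)`, `n ≥ 1`, `λ : {1,…,n} → ℝ` and `1 ≤ m ≤ n`,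
the following are equivalent:
(i) for every subset `I` with `|I| = m`, `∑_{i ∈ I} arccot λᵢ < θ`;
(ii) for every nonempty subset `K` with `|K| ≤ m`,
`Re (∏_{i ∈ K} (λᵢ + i)) − cot θ · Im (∏_{i ∈ K} (λᵢ + i)) > 0`. -/
theorem cone_iff_positivity (θ : ℝ) (hθ : θ ∈ Set.Ioo 0 π) (n : ℕ) (hn : 1 ≤ n)
    (lam : Fin n → ℝ) (m : ℕ) (hm1 : 1 ≤ m) (hmn : m ≤ n) :
    (∀ I : Finset (Fin n), I.card = m → ∑ i ∈ I, arccot (lam i) < θ) ↔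
      (∀ K : Finset (Fin n), K.Nonempty → K.card ≤ m →
        0 < (∏ i ∈ K, ((lam i : ℂ) + Complex.I)).re
              - (Real.cos θ / Real.sin θ) * (∏ i ∈ K, ((lam i : ℂ) + Complex.I)).im) := by
  simp only [pos_iff_sin θ hθ]
  constructor
  · intro h K hK hKm
    obtain ⟨I, hKI, hI⟩ := Finset.exists_superset_card_eq hKm (by simpa using hmn)
    have h1 := h I hI
    have h2 : ∑ i ∈ K, arccot (lam i) ≤ ∑ i ∈ I, arccot (lam i) :=
      Finset.sum_le_sum_of_subset_of_nonneg hKI fun i _ _ => (arccot_pos' _).le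
    have h3 : 0 < ∑ i ∈ K, arccot (lam i) := Finset.sum_pos (fun i _ => arccot_pos' _) hK
    exact Real.sin_pos_of_pos_of_lt_pi (by linarith) (by linarith [hθ.2])
  · intro h
    have key : ∀ K : Finset (Fin n), K.card ≤ m → ∑ i ∈ K, arccot (lam i) < θ := by
      intro K
      induction K using Finset.induction_on with
      | empty => intro _; simpa using hθ.1
      | insert a s ha ih =>
        intro hc
        have h1 := ih ((Finset.card_le_card (Finset.subset_insert a s)).trans hc)
        have h2 := h _ (Finset.insert_nonempty a s) hc
        rw [Finset.sum_insert ha] at h2 ⊢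
        by_contra hcon
        have h3 := arccot_lt_pi' (lam a)
        have h4 := Real.sin_nonpos_of_nonpos_of_neg_pi_le
          (x := θ - (arccot (lam a) + ∑ i ∈ s, arccot (lam i))) (by linarith) (by linarith)
        linarith
    exact fun I hI => key I hI.le
end

section
/- Let n ≥ 2, let 0 < θ < Θ < π, and let θ₁, …, θ_n ∈ (0, π). Assume that ∑_{i∈I} θᵢ < θ for every subset I of {1, …, n} with |I| ≤ n − 1, and that sin(θ − ∑_{i=1}^n θᵢ) > −sin((Θ − θ)/2). Then ∑_{i=1}^n θᵢ < Θ. -/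
open Real

/-- Let `n ≥ 2`, `0 < θ < Θ < π`, and `θ₁, …, θ_n ∈ (0, π)`.
If `∑_{i ∈ I} θᵢ < θ` for every subset `I` with `|I| ≤ n − 1`, and
`sin (θ − ∑ θᵢ) > −sin ((Θ − θ)/2)`, then `∑ θᵢ < Θ`. -/
theorem sum_lt_Theta (n : ℕ) (hn : 2 ≤ n) (θ Θ : ℝ) (hθ : 0 < θ) (hθΘ : θ < Θ) (hΘ : Θ < π)
    (θs : Fin n → ℝ) (hθs : ∀ i, θs i ∈ Set.Ioo 0 π)
    (hcone : ∀ I : Finset (Fin n), I.card ≤ n - 1 → ∑ i ∈ I, θs i < θ)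
    (hsin : Real.sin (θ - ∑ i, θs i) > -Real.sin ((Θ - θ) / 2)) :
    (∑ i, θs i) < Θ := by
  by_contra hS
  push Not at hS
  let k : Fin n := ⟨0, by omega⟩
  have h1 : θs k < θ := by
    have := hcone {k} (by rw [Finset.card_singleton]; omega)
    simpa using this
  have h2 : ∑ i ∈ Finset.univ.erase k, θs i < θ := by
    apply hcone
    rw [Finset.card_erase_of_mem (Finset.mem_univ k), Finset.card_univ, Fintype.card_fin]
  have h3 := Finset.add_sum_erase Finset.univ θs (Finset.mem_univ k)
  generalize (∑ i, θs i) = S at *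
  have h4 : Real.sin (S - θ) < Real.sin ((Θ - θ) / 2) := by
    have : θ - S = -(S - θ) := by ring
    rw [this, Real.sin_neg] at hsin
    linarith
  apply absurd h4
  rw [not_lt]
  rcases le_total (S - θ) (π / 2) with h | h
  · apply Real.sin_le_sin_of_le_of_le_pi_div_two <;> linarith
  · rw [← Real.sin_pi_sub (S - θ)]
    apply Real.sin_le_sin_of_le_of_le_pi_div_two <;> linarith
end

section
/- Let θ ∈ (0, π) and let z be a real number with z > −1/sin(θ). Suppose λ₁, λ₂, λ₃ are positive real numbers satisfying λᵢλⱼ > 1/sin²(θ) for all i ≠ j and the equation λ₁λ₂λ₃ = (1/sin²(θ))·(λ₁ + λ₂ + λ₃ + 2z). Then g := λ₁λ₂ + λ₁λ₃ + λ₂λ₃ + 2z(λ₁ + λ₂ + λ₃) + 3z² > 0. -/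
open Real

/-- Let `θ ∈ (0, π)` and `z > −1/sin θ`. If `λ₁, λ₂, λ₃ > 0` satisfy
`λᵢλⱼ > 1/sin²θ` for all `i ≠ j` and `λ₁λ₂λ₃ = (1/sin²θ)(λ₁ + λ₂ + λ₃ + 2z)`, then
`g := λ₁λ₂ + λ₁λ₃ + λ₂λ₃ + 2z(λ₁ + λ₂ + λ₃) + 3z² > 0`. -/
theorem discriminant_pos (θ : ℝ) (hθ : θ ∈ Set.Ioo 0 π) (z : ℝ)
    (hz : -(1 / Real.sin θ) < z) (l1 l2 l3 : ℝ)
    (h1 : 0 < l1) (h2 : 0 < l2) (h3 : 0 < l3)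
    (h12 : 1 / Real.sin θ ^ 2 < l1 * l2)
    (h13 : 1 / Real.sin θ ^ 2 < l1 * l3)
    (h23 : 1 / Real.sin θ ^ 2 < l2 * l3)
    (heq : l1 * l2 * l3 = (1 / Real.sin θ ^ 2) * (l1 + l2 + l3 + 2 * z)) :
    0 < l1 * l2 + l1 * l3 + l2 * l3 + 2 * z * (l1 + l2 + l3) + 3 * z ^ 2 := by
  have hs : 0 < Real.sin θ := Real.sin_pos_of_mem_Ioo hθ
  have hk : 0 < 1 / Real.sin θ := by positivity
  have hK : 1 / Real.sin θ ^ 2 = (1 / Real.sin θ) ^ 2 := by rw [div_pow, one_pow]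
  rw [hK] at h12 heq
  generalize 1 / Real.sin θ = k at *
  rcases le_or_gt 0 z with hz0 | hz0
  · positivity
  have hzk : 0 < k ^ 2 - z ^ 2 := by nlinarith
  have hp : 0 < l1 * l2 - k ^ 2 := by linarith
  have hkk : 0 < k ^ 2 := by positivity
  have key : (k ^ 2 * (l1 * l2 - k ^ 2)) *
      (l1 * l2 + l1 * l3 + l2 * l3 + 2 * z * (l1 + l2 + l3) + 3 * z ^ 2) =
      (k ^ 2 * (l1 + l2) + z * (l1 * l2 + k ^ 2)) ^ 2
        + l1 * l2 * (l1 * l2 - k ^ 2) * (k ^ 2 - z ^ 2) := by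
    linear_combination (k ^ 2 * (l1 + l2 + 2 * z)) * heq
  have hpos : 0 < (k ^ 2 * (l1 * l2 - k ^ 2)) *
      (l1 * l2 + l1 * l3 + l2 * l3 + 2 * z * (l1 + l2 + l3) + 3 * z ^ 2) := by
    rw [key]
    positivity
  exact pos_of_mul_pos_right hpos (by positivity)
end

section
/- Let θ ∈ (0, π) and let z > −1/sin(θ) be a real number. Suppose λ₁, λ₂, λ₃ are positive real numbers satisfying λᵢλⱼ > 1/sin²(θ) for all i ≠ j and λ₁λ₂λ₃ = (1/sin²(θ))·(λ₁ + λ₂ + λ₃ + 2z). Set S := λ₁ + λ₂ + λ₃ and define a := 2(λ₂ + λ₃ + 2z)(S + 2z), b := 2(λ₃ + z)(S + 2z), c := 2(λ₁ + λ₃ + 2z)(S + 2z). Then a > 0, c > 0, and ac − b² > 0; consequently the quadratic form (v₁, v₂) ↦ a v₁² + 2b v₁v₂ + c v₂² is positive definite on ℝ². -/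
open Real

/-- Under the dHYM eigenvalue constraints in dimension 3, the
coefficients `a := 2(λ₂+λ₃+2z)(S+2z)`, `b := 2(λ₃+z)(S+2z)`, `c := 2(λ₁+λ₃+2z)(S+2z)`
(with `S := λ₁+λ₂+λ₃`) satisfy `a > 0`, `c > 0` and `ac − b² > 0`; consequently the
quadratic form `(v₁, v₂) ↦ a v₁² + 2b v₁v₂ + c v₂²` is positive definite on `ℝ²`. -/
theorem quadratic_pos_def (θ : ℝ) (hθ : θ ∈ Set.Ioo 0 π) (z : ℝ)
    (hz : -(1 / Real.sin θ) < z) (l1 l2 l3 : ℝ)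
    (h1 : 0 < l1) (h2 : 0 < l2) (h3 : 0 < l3)
    (h12 : 1 / Real.sin θ ^ 2 < l1 * l2)
    (h13 : 1 / Real.sin θ ^ 2 < l1 * l3)
    (h23 : 1 / Real.sin θ ^ 2 < l2 * l3)
    (heq : l1 * l2 * l3 = (1 / Real.sin θ ^ 2) * (l1 + l2 + l3 + 2 * z)) :
    (0 < 2 * (l2 + l3 + 2 * z) * ((l1 + l2 + l3) + 2 * z) ∧
      0 < 2 * (l1 + l3 + 2 * z) * ((l1 + l2 + l3) + 2 * z) ∧
      0 < 2 * (l2 + l3 + 2 * z) * ((l1 + l2 + l3) + 2 * z)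
            * (2 * (l1 + l3 + 2 * z) * ((l1 + l2 + l3) + 2 * z))
          - (2 * (l3 + z) * ((l1 + l2 + l3) + 2 * z)) ^ 2) ∧
    ∀ v1 v2 : ℝ, (v1, v2) ≠ (0, 0) →
      0 < 2 * (l2 + l3 + 2 * z) * ((l1 + l2 + l3) + 2 * z) * v1 ^ 2
            + 2 * (2 * (l3 + z) * ((l1 + l2 + l3) + 2 * z)) * v1 * v2
            + 2 * (l1 + l3 + 2 * z) * ((l1 + l2 + l3) + 2 * z) * v2 ^ 2 := by
  have hs : 0 < Real.sin θ := Real.sin_pos_of_mem_Ioo hθ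
  have hk : 0 < 1 / Real.sin θ := by positivity
  have hk2 : 1 / Real.sin θ ^ 2 = (1 / Real.sin θ) ^ 2 := by
    rw [div_pow, one_pow]
  rw [hk2] at h12 h13 h23 heq
  generalize 1 / Real.sin θ = k at *
  have hkk : 0 < k ^ 2 := by positivity
  have hS : 0 < (l1 + l2 + l3) + 2 * z := by
    have h : 0 < k ^ 2 * (l1 + l2 + l3 + 2 * z) := by rw [← heq]; positivity
    exact pos_of_mul_pos_right h hkk.le
  have amgm : ∀ x y : ℝ, 0 < x → 0 < y → k ^ 2 < x * y → 0 < x + y + 2 * z := by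
    intro x y hx hy h
    have : 2 * k < x + y := by
      apply lt_of_pow_lt_pow_left₀ 2 (by positivity)
      nlinarith [sq_nonneg (x - y)]
    linarith
  have hA := amgm l2 l3 h2 h3 h23
  have hC := amgm l1 l3 h1 h3 h13
  have hD : 0 < l1 * l2 + l1 * l3 + l2 * l3 + 2 * z * (l1 + l2 + l3) + 3 * z ^ 2 := by
    rcases le_or_gt 0 z with h0 | h0
    · positivity
    · have hzk : z ^ 2 < k ^ 2 := by nlinarith
      have hco : 0 < k ^ 2 + l1 ^ 2 + 2 * z * l1 := by nlinarith [sq_nonneg (l1 + z)]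
      have hid : k ^ 2 * (l1 * l2 + l1 * l3 + l2 * l3 + 2 * z * (l1 + l2 + l3) + 3 * z ^ 2)
          = (l2 * l3 - k ^ 2) * (k ^ 2 + l1 ^ 2 + 2 * z * l1) + k ^ 2 * (k ^ 2 - z ^ 2) := by
        linear_combination (-(l1 + 2 * z)) * heq
      have hp := mul_pos (sub_pos.2 h23) hco
      have hq := mul_pos hkk (sub_pos.2 hzk)
      refine pos_of_mul_pos_right (a := k ^ 2) ?_ hkk.le
      rw [hid]; linarith
  generalize hSd : (l1 + l2 + l3) + 2 * z = s at *
  have ha : 0 < 2 * (l2 + l3 + 2 * z) * s := by positivity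
  have hc : 0 < 2 * (l1 + l3 + 2 * z) * s := by positivity
  have hd : 0 < 2 * (l2 + l3 + 2 * z) * s * (2 * (l1 + l3 + 2 * z) * s)
      - (2 * (l3 + z) * s) ^ 2 := by
    have := mul_pos (pow_pos hS 2) hD
    nlinarith
  refine ⟨⟨ha, hc, hd⟩, ?_⟩
  intro v1 v2 hv
  generalize 2 * (l2 + l3 + 2 * z) * s = a at *
  generalize 2 * (l1 + l3 + 2 * z) * s = c at *
  generalize 2 * (l3 + z) * s = b at *
  refine pos_of_mul_pos_right (a := a) ?_ ha.le
  have e : a * (a * v1 ^ 2 + 2 * b * v1 * v2 + c * v2 ^ 2)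
      = (a * v1 + b * v2) ^ 2 + (a * c - b ^ 2) * v2 ^ 2 := by ring
  rw [e]
  by_cases hv2 : v2 = 0
  · have hv1 : v1 ≠ 0 := by
      rintro rfl
      exact hv (by rw [hv2])
    subst hv2
    have : 0 < (a * v1) ^ 2 := by positivity
    simpa using this
  · have : 0 < (a * c - b ^ 2) * v2 ^ 2 := by positivity
    linarith [sq_nonneg (a * v1 + b * v2)]
end

section
/- Let θ ∈ (0, π) and set ε := 1/sin(θ) − |cos(θ)/sin(θ)| (note ε > 0). Let δ ∈ (0, ε), t ∈ [0, 1], let f be a real number with f > −ε + δ, let d ≥ 0, and set z := t·f + d + cos(θ)/sin(θ). If λ and μ are positive real numbers with λμ > 1/sin²(θ), then λ + μ + 2z > 2δ. -/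
open Real

/-- Let `θ ∈ (0, π)` and `ε := 1/sin θ − |cos θ/sin θ| > 0`. Let
`δ ∈ (0, ε)`, `t ∈ [0, 1]`, `f > −ε + δ`, `d ≥ 0`, and `z := t f + d + cos θ/sin θ`.
If `λ, μ > 0` with `λμ > 1/sin²θ`, then `λ + μ + 2z > 2δ`. -/
theorem sum_plus_2z_lower_bound (θ : ℝ) (hθ : θ ∈ Set.Ioo 0 π)
    (hε : 0 < 1 / Real.sin θ - |Real.cos θ / Real.sin θ|)
    (δ : ℝ) (hδ : δ ∈ Set.Ioo 0 (1 / Real.sin θ - |Real.cos θ / Real.sin θ|))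
    (t : ℝ) (ht : t ∈ Set.Icc (0 : ℝ) 1)
    (f : ℝ) (hf : -(1 / Real.sin θ - |Real.cos θ / Real.sin θ|) + δ < f)
    (d : ℝ) (hd : 0 ≤ d)
    (lam mu : ℝ) (hlam : 0 < lam) (hmu : 0 < mu)
    (hprod : 1 / Real.sin θ ^ 2 < lam * mu) :
    2 * δ < lam + mu + 2 * (t * f + d + Real.cos θ / Real.sin θ) := by
  obtain ⟨h0, h1⟩ := hδ
  obtain ⟨t0, t1⟩ := ht
  have hs : 0 < Real.sin θ := Real.sin_pos_of_mem_Ioo hθ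
  have hc : 0 < 1 / Real.sin θ := by positivity
  have hp : (1 / Real.sin θ) ^ 2 < lam * mu := by
    rw [div_pow, one_pow]; exact hprod
  have hk := neg_abs_le (Real.cos θ / Real.sin θ)
  generalize 1 / Real.sin θ = c at *
  generalize |Real.cos θ / Real.sin θ| = a at *
  generalize Real.cos θ / Real.sin θ = k at *
  have hsum : 2 * c < lam + mu := by
    apply lt_of_pow_lt_pow_left₀ 2 (by positivity)
    nlinarith [sq_nonneg (lam - mu)]
  have htf : t * (-(c - a) + δ) ≤ t * f := mul_le_mul_of_nonneg_left hf.le t0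
  have h2 : 0 ≤ (1 - t) * ((c - a) - δ) := mul_nonneg (by linarith) (by linarith)
  nlinarith
end
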